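/- arXiv:math/0702117 — 2 statements merged into one kernel-verified Lean document; each statement's English description precedes it below -/
import Mathlib

section
/- A hyperbolic group G contains only finitely many conjugacy classes of torsion elements: there exists a finite subset T of G such that every element of G of finite order is conjugate in G to an element of T. -/
/-- The word metric on a group `G` with respect to a generating set `S`:
`wordDist S g h` is the least length of a word in `S ∪ S⁻¹` representing `g⁻¹ * h`. -/
noncomputable def wordDist {G : Type*} [Group G] (S : Set G) (g h : G) : ℝ :=
  sInf {r : ℝ | ∃ l : List G, (∀ x ∈ l, x ∈ S ∨ x⁻¹ ∈ S) ∧ l.prod = g⁻¹ * h ∧ r = l.length}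

/-- The Gromov product `(x|y)_w` with respect to the word metric for `S`. -/
noncomputable def gromovProd {G : Type*} [Group G] (S : Set G) (w x y : G) : ℝ :=
  (wordDist S x w + wordDist S y w - wordDist S x y) / 2

/-- A group is (Gromov) hyperbolic if it admits a finite generating set `S` such that
the word metric `d_S` satisfies the Gromov product four-point condition for some `δ ≥ 0`. -/
def IsHyperbolicGroup (G : Type*) [Group G] : Prop :=
  ∃ S : Set G, S.Finite ∧ Subgroup.closure S = ⊤ ∧
    ∃ δ : ℝ, 0 ≤ δ ∧ ∀ w x y z : G,
      gromovProd S w x y ≥ min (gromovProd S w x z) (gromovProd S w y z) - δ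

/-!
Let `H` be a finite subgroup and let `x` be a center of `H`: a point whose largest distance `r` to
`H` is as small as possible. Left translation by `h ∈ H` preserves `H`, so `h * x` is a center too.
If `m` is a midpoint of `x` and `h * x`, some `z ∈ H` satisfies `r ≤ d(m, z)`, and the four-point
condition at `z` then bounds `d(x, h * x)`, the length of `x⁻¹ * h * x`, by `4 * δ + 1`. Thus every
finite subgroup has a conjugate inside a fixed, finite, ball.
-/

open scoped Pointwise

/-- `IsWord S l` says that `l` is a word in the letters `S ∪ S⁻¹`; it represents `l.prod`. -/
def IsWord {G : Type*} [Group G] (S : Set G) (l : List G) : Prop :=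
  ∀ x ∈ l, x ∈ S ∨ x⁻¹ ∈ S

/-- `IsCenter S Y x r` says that `r` is the least radius of a ball of the word metric containing `Y`
and that `x` is the center of such a ball (a Chebyshev center). Minimality is expressed by a point
of `Y` at distance at least `r` from any given `y`. -/
structure IsCenter {G : Type*} [Group G] (S Y : Set G) (x : G) (r : ℝ) : Prop where
  wordDist_le : ∀ z ∈ Y, wordDist S x z ≤ r
  exists_le_wordDist : ∀ y, ∃ z ∈ Y, r ≤ wordDist S y z

section WordMetric

variable {G : Type*} [Group G] {S : Set G}

theorem IsWord.reverse_map_inv {l : List G} (hl : IsWord S l) :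
    IsWord S (l.map (·⁻¹)).reverse := by
  intro x hx
  obtain ⟨y, hy, rfl⟩ := List.mem_map.mp (List.mem_reverse.mp hx)
  simpa only [inv_inv] using (hl y hy).symm

theorem exists_isWord_prod_eq (hS : Subgroup.closure S = ⊤) (g : G) :
    ∃ l, IsWord S l ∧ l.prod = g := by
  have hg : g ∈ (Subgroup.closure S).toSubmonoid := by simp [hS]
  rw [Subgroup.closure_toSubmonoid] at hg
  exact Submonoid.exists_list_of_mem_closure hg

theorem wordDist_le_length {g h : G} {l : List G} (hl : IsWord S l) (hprod : l.prod = g⁻¹ * h) :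
    wordDist S g h ≤ l.length := by
  refine csInf_le ⟨0, ?_⟩ ⟨l, hl, hprod, rfl⟩
  rintro _ ⟨l', -, -, rfl⟩
  exact l'.length.cast_nonneg

theorem exists_isWord_wordDist_eq_length (hS : Subgroup.closure S = ⊤) (g h : G) :
    ∃ l, IsWord S l ∧ l.prod = g⁻¹ * h ∧ wordDist S g h = l.length := by
  obtain ⟨l, ⟨hl, hprod⟩, hmin⟩ := (measure List.length).wf.has_min
    {l | IsWord S l ∧ l.prod = g⁻¹ * h} (exists_isWord_prod_eq hS _)
  refine ⟨l, hl, hprod, (wordDist_le_length hl hprod).antisymm ?_⟩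
  refine le_csInf ⟨_, l, hl, hprod, rfl⟩ ?_
  rintro _ ⟨l', hl', hprod', rfl⟩
  exact Nat.cast_le.mpr (not_lt.mp (hmin l' ⟨hl', hprod'⟩))

theorem wordDist_nonneg (g h : G) : 0 ≤ wordDist S g h := by
  refine Real.sInf_nonneg ?_
  rintro _ ⟨l, -, -, rfl⟩
  exact l.length.cast_nonneg

theorem wordDist_comm (g h : G) : wordDist S g h = wordDist S h g := by
  have reverse_word : ∀ g h : G, ∀ r : ℝ,
      (∃ l, IsWord S l ∧ l.prod = g⁻¹ * h ∧ r = l.length) →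
      ∃ l, IsWord S l ∧ l.prod = h⁻¹ * g ∧ r = l.length := by
    rintro g h _ ⟨l, hl, hprod, rfl⟩
    refine ⟨_, hl.reverse_map_inv, ?_, by simp⟩
    rw [← List.prod_inv_reverse, hprod, mul_inv_rev, inv_inv]
  exact congrArg sInf (Set.ext fun r => ⟨reverse_word g h r, reverse_word h g r⟩)

theorem wordDist_mul_left (a g h : G) : wordDist S (a * g) (a * h) = wordDist S g h := by
  simp only [wordDist, mul_inv_rev, mul_assoc, inv_mul_cancel_left]

theorem finite_setOf_wordDist_le (hfin : S.Finite) (hS : Subgroup.closure S = ⊤) (g : G) (r : ℝ) :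
    {h | wordDist S g h ≤ r}.Finite := by
  have : Finite {x // x ∈ S ∨ x⁻¹ ∈ S} := (hfin.union hfin.inv).to_subtype
  refine ((List.finite_length_le {x // x ∈ S ∨ x⁻¹ ∈ S} ⌊r⌋₊).image
    fun l => g * (l.map Subtype.val).prod).subset fun h hh => ?_
  obtain ⟨l, hl, hprod, hlen⟩ := exists_isWord_wordDist_eq_length hS g h
  have hlr : l.length ≤ ⌊r⌋₊ := Nat.le_floor (hlen ▸ hh)
  lift l to List {x // x ∈ S ∨ x⁻¹ ∈ S} using hl
  refine ⟨l, by simpa using hlr, ?_⟩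
  exact (congrArg (g * ·) hprod).trans (mul_inv_cancel_left g h)

theorem exists_wordDist_approx_midpoint (hS : Subgroup.closure S = ⊤) (x y : G) :
    ∃ m, 2 * wordDist S x m ≤ wordDist S x y + 1 ∧ 2 * wordDist S y m ≤ wordDist S x y + 1 := by
  obtain ⟨l, hl, hprod, hlen⟩ := exists_isWord_wordDist_eq_length hS x y
  set k := l.length / 2
  have hxm : wordDist S x (x * (l.take k).prod) ≤ (l.take k).length :=
    wordDist_le_length (fun a ha => hl a (List.mem_of_mem_take ha)) (inv_mul_cancel_left _ _).symm
  have hmy : wordDist S (x * (l.take k).prod) y ≤ (l.drop k).length := by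
    refine wordDist_le_length (fun a ha => hl a (List.mem_of_mem_drop ha)) ?_
    rw [mul_inv_rev, mul_assoc, ← hprod, ← List.prod_take_mul_prod_drop l k, inv_mul_cancel_left]
  have htake : 2 * ((l.take k).length : ℝ) ≤ l.length + 1 := by
    exact_mod_cast (by grind : 2 * (l.take k).length ≤ l.length + 1)
  have hdrop : 2 * ((l.drop k).length : ℝ) ≤ l.length + 1 := by
    exact_mod_cast (by grind : 2 * (l.drop k).length ≤ l.length + 1)
  refine ⟨x * (l.take k).prod, by linarith, ?_⟩
  rw [wordDist_comm]
  linarith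

theorem exists_isCenter (hS : Subgroup.closure S = ⊤) {Y : Set G} (hne : Y.Nonempty) {a : G}
    (hbdd : BddAbove (wordDist S a '' Y)) : ∃ x r, IsCenter S Y x r := by
  classical
  have hex : ∃ n : ℕ, ∃ x, ∀ z ∈ Y, wordDist S x z ≤ n := by
    obtain ⟨b, hb⟩ := hbdd
    exact ⟨⌈b⌉₊, a, fun z hz => (hb ⟨z, hz, rfl⟩).trans (Nat.le_ceil b)⟩
  obtain ⟨x, hx⟩ := Nat.find_spec hex
  refine ⟨x, Nat.find hex, hx, fun y => ?_⟩
  by_contra! hlt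
  obtain ⟨z₀, hz₀⟩ := hne
  have hpos : 0 < Nat.find hex := by exact_mod_cast (wordDist_nonneg y z₀).trans_lt (hlt z₀ hz₀)
  refine Nat.find_min hex (Nat.sub_lt hpos one_pos) ⟨y, fun z hz => ?_⟩
  obtain ⟨l, -, -, hlen⟩ := exists_isWord_wordDist_eq_length hS y z
  have hlt_z := hlt z hz
  rw [hlen, Nat.cast_lt] at hlt_z
  rw [hlen, Nat.cast_le]
  exact Nat.le_sub_one_of_lt hlt_z

theorem IsCenter.smul {Y : Set G} {x : G} {r : ℝ} (hx : IsCenter S Y x r) (g : G) :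
    IsCenter S (g • Y) (g * x) r where
  wordDist_le := by
    rintro _ ⟨z, hz, rfl⟩
    exact (wordDist_mul_left g x z).trans_le (hx.wordDist_le z hz)
  exists_le_wordDist y := by
    obtain ⟨z, hz, hle⟩ := hx.exists_le_wordDist (g⁻¹ * y)
    refine ⟨g * z, Set.smul_mem_smul_set hz, hle.trans_eq ?_⟩
    rw [← wordDist_mul_left g, mul_inv_cancel_left]

end WordMetric

section Hyperbolic

variable {G : Type*} [Group G] {S : Set G} {δ : ℝ}

theorem wordDist_le_of_four_point {x y m z : G} {r c : ℝ}
    (hδ : min (gromovProd S z x m) (gromovProd S z y m) - δ ≤ gromovProd S z x y)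
    (hxz : wordDist S x z ≤ r) (hyz : wordDist S y z ≤ r)
    (hmz : r ≤ wordDist S m z) (hxm : wordDist S x m ≤ c) (hym : wordDist S y m ≤ c) :
    wordDist S x y ≤ c + 2 * δ := by
  unfold gromovProd at hδ
  rw [sub_le_iff_le_add, min_le_iff] at hδ
  rcases hδ with hx | hy <;> linarith

theorem IsCenter.wordDist_center_le (hS : Subgroup.closure S = ⊤)
    (hδ : ∀ w x y z, min (gromovProd S w x z) (gromovProd S w y z) - δ ≤ gromovProd S w x y)
    {Y : Set G} {x y : G} {r : ℝ} (hx : IsCenter S Y x r) (hy : IsCenter S Y y r) :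
    wordDist S x y ≤ 4 * δ + 1 := by
  obtain ⟨m, hxm, hym⟩ := exists_wordDist_approx_midpoint hS x y
  obtain ⟨z, hz, hmz⟩ := hx.exists_le_wordDist m
  have h : wordDist S x y ≤ (wordDist S x y + 1) / 2 + 2 * δ :=
    wordDist_le_of_four_point (hδ z x y m) (hx.wordDist_le z hz) (hy.wordDist_le z hz) hmz
      (by linarith) (by linarith)
  linarith

theorem exists_conj_wordDist_one_le (hS : Subgroup.closure S = ⊤)
    (hδ : ∀ w x y z, min (gromovProd S w x z) (gromovProd S w y z) - δ ≤ gromovProd S w x y)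
    {H : Subgroup G} (hH : BddAbove (wordDist S 1 '' H)) :
    ∃ u, ∀ h ∈ H, wordDist S 1 (u⁻¹ * h * u) ≤ 4 * δ + 1 := by
  obtain ⟨x, r, hx⟩ := exists_isCenter hS (OneMemClass.coe_nonempty H) hH
  refine ⟨x, fun h hh => ?_⟩
  have hhx : IsCenter S H (h * x) r := by simpa only [smul_coe_set hh] using hx.smul h
  calc wordDist S 1 (x⁻¹ * h * x)
      = wordDist S x (h * x) := by
        rw [← wordDist_mul_left x, mul_one, mul_assoc, mul_inv_cancel_left]
    _ ≤ 4 * δ + 1 := hx.wordDist_center_le hS hδ hhx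

end Hyperbolic

theorem stmt_11_general {G : Type*} [Group G] (hG : IsHyperbolicGroup G) :
    ∃ T : Finset G, ∀ H : Subgroup G, (H : Set G).Finite → ∃ u : G, ∀ h ∈ H, u⁻¹ * h * u ∈ T := by
  obtain ⟨S, hfin, hS, δ, -, hδ⟩ := hG
  have hball := finite_setOf_wordDist_le hfin hS 1 (4 * δ + 1)
  refine ⟨hball.toFinset, fun H hH => ?_⟩
  obtain ⟨u, hu⟩ := exists_conj_wordDist_one_le hS hδ (hH.image (wordDist S 1)).bddAbove
  exact ⟨u, fun h hh => hball.mem_toFinset.mpr (hu h hh)⟩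

/-- A hyperbolic group contains only finitely many conjugacy classes of torsion
elements. -/
theorem stmt_11 {G : Type*} [Group G] (hG : IsHyperbolicGroup G) :
    ∃ T : Finset G, ∀ g : G, (∃ n : ℕ, 1 ≤ n ∧ g ^ n = 1) →
      ∃ t ∈ T, ∃ u : G, u * t * u⁻¹ = g := by
  obtain ⟨T, hT⟩ := stmt_11_general hG
  refine ⟨T, fun g ⟨n, hn, hgn⟩ => ?_⟩
  obtain ⟨u, hu⟩ := hT (Subgroup.zpowers g)
    (isOfFinOrder_iff_pow_eq_one.mpr ⟨n, hn, hgn⟩).finite_zpowers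
  exact ⟨u⁻¹ * g * u, hu g (Subgroup.mem_zpowers g), u, by group⟩
end

section
/- A torsion-free hyperbolic group has trivial root structure: if G is a torsion-free hyperbolic group, x, y ∈ G, and n is a nonzero integer with x^n = y^n, then x = y. -/
/-!
Let `g` have infinite order in a hyperbolic group with word length `ℓ`. For a long power `u` of `g`,
the four-point condition makes `a ↦ ℓ (a * u) - ℓ u` a quasi-homomorphism, with defect `2δ`, on the
elements commuting with `g` that are short compared to `u`. It is therefore bounded by `6δ` on their
commutators, and an element on which it is bounded displaces the midpoint of a geodesic from `1` to
`u` by a bounded amount. Conjugation by midpoints thus carries any finite set of commutators of the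
centralizer of `g` into a ball whose radius is independent of the set, so the centralizer has only
finitely many commutators, and by Schur's theorem they have finite order. If `G` is torsion-free and
`g = x ^ n = y ^ n`, then `x` and `y` lie in this centralizer, so they commute and
`(x * y⁻¹) ^ n = 1`.
-/

open Filter
open scoped commutatorElement

section Group

variable {G : Type*} [Group G]

theorem isOfFinOrder_commutatorElement_of_finite_commutatorSet [Finite (commutatorSet G)]
    (a b : G) : IsOfFinOrder ⁅a, b⁆ := by
  have hmem : ⁅a, b⁆ ∈ commutator G :=
    Subgroup.commutator_mem_commutator (Subgroup.mem_top a) (Subgroup.mem_top b)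
  exact Submonoid.isOfFinOrder_coe.2 (isOfFinOrder_of_finite (⟨⁅a, b⁆, hmem⟩ : commutator G))

theorem isOfFinOrder_mul_inv_of_zpow_eq {x y : G} {n : ℤ} (hcomm : Commute x y) (hn : n ≠ 0)
    (hxy : x ^ n = y ^ n) : IsOfFinOrder (x * y⁻¹) := by
  refine isOfFinOrder_iff_zpow_eq_one.2 ⟨n, hn, ?_⟩
  rw [hcomm.inv_right.mul_zpow, inv_zpow, hxy, mul_inv_cancel]

end Group

theorem finite_of_forall_eventually_mem_finite {ι α β : Type*} {l : Filter ι} [l.NeBot]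
    {f : ι → α → β} {s : Set α} {t : Set β} (hf : ∀ i, (f i).Injective) (ht : t.Finite)
    (hst : ∀ a ∈ s, ∀ᶠ i in l, f i a ∈ t) : s.Finite := by
  by_contra hs
  obtain ⟨r, hrs, hcard⟩ := Set.Infinite.exists_subset_card_eq hs (ht.toFinset.card + 1)
  obtain ⟨i, hi⟩ : ∃ i, ∀ a ∈ r, f i a ∈ t :=
    ((eventually_all_finset r).2 fun a ha ↦ hst a (hrs ha)).exists
  have hle : r.card ≤ ht.toFinset.card :=
    Finset.card_le_card_of_injOn (f i) (fun a ha ↦ ht.mem_toFinset.2 (hi a ha)) (hf i).injOn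
  omega

section GroupSeminorm

variable {G : Type*} [Group G] {ℓ : GroupSeminorm G} {δ ε C : ℝ} {a b g h p u : G}

/-- Gromov's four-point condition for the left-invariant pseudometric `(x, y) ↦ ℓ (x⁻¹ * y)`:
of the three ways to pair up four points, the two largest sums of distances differ by at most
`2 * δ`. -/
def FourPointCondition (ℓ : GroupSeminorm G) (δ : ℝ) : Prop :=
  ∀ w x y z : G, ℓ (x⁻¹ * y) + ℓ (z⁻¹ * w) ≤
    max (ℓ (x⁻¹ * z) + ℓ (y⁻¹ * w)) (ℓ (x⁻¹ * w) + ℓ (y⁻¹ * z)) + 2 * δ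

/-- `p` is, up to an additive error `ε`, a midpoint of `1` and `u` for the left-invariant
pseudometric `(x, y) ↦ ℓ (x⁻¹ * y)`. -/
structure IsApproxMidpoint (ℓ : GroupSeminorm G) (ε : ℝ) (u p : G) : Prop where
  left : ℓ p ≤ ℓ u / 2 + ε
  right : ℓ (p⁻¹ * u) ≤ ℓ u / 2 + ε

/-- The change in the length of `u` under left multiplication by `a`. For long `u` it plays the role
of a Busemann function centred at `u`, evaluated at `a⁻¹`. -/
def lengthGrowth (ℓ : GroupSeminorm G) (u a : G) : ℝ :=
  ℓ (a * u) - ℓ u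

theorem apply_le_apply_add_apply_mul (ℓ : GroupSeminorm G) (a u : G) : ℓ u ≤ ℓ a + ℓ (a * u) := by
  simpa using map_mul_le_add ℓ a⁻¹ (a * u)

theorem apply_inv_mul_comm (ℓ : GroupSeminorm G) (a b : G) : ℓ (a⁻¹ * b) = ℓ (b⁻¹ * a) := by
  rw [← map_inv_eq_map, mul_inv_rev, inv_inv]

theorem apply_commutatorElement_le (ℓ : GroupSeminorm G) (a b : G) :
    ℓ ⁅a, b⁆ ≤ 2 * (ℓ a + ℓ b) :=
  calc ℓ ⁅a, b⁆ ≤ ℓ (a * b) + ℓ (a⁻¹ * b⁻¹) := by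
        rw [commutatorElement_def, mul_assoc (a * b)]
        exact map_mul_le_add ℓ _ _
    _ ≤ (ℓ a + ℓ b) + (ℓ a⁻¹ + ℓ b⁻¹) :=
        add_le_add (map_mul_le_add ℓ _ _) (map_mul_le_add ℓ _ _)
    _ = 2 * (ℓ a + ℓ b) := by rw [map_inv_eq_map, map_inv_eq_map, two_mul]

theorem apply_mul_inv_mul_of_commute (ℓ : GroupSeminorm G) (hbu : Commute b u) :
    ℓ ((b * u)⁻¹ * u) = ℓ b := by
  rw [hbu.eq, mul_inv_rev, inv_mul_cancel_right, map_inv_eq_map]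

namespace FourPointCondition

theorem abs_lengthGrowth_mul_sub_le (hℓ : FourPointCondition ℓ δ) (hbu : Commute b u)
    (hu : ℓ a + ℓ b ≤ ℓ u) :
    |lengthGrowth ℓ u (a * b) - (lengthGrowth ℓ u a + lengthGrowth ℓ u b)| ≤ 2 * δ := by
  -- The points are `a⁻¹, 1, u, b * u`. As `b` commutes with `u`, the distance from `u` to `b * u`
  -- is `ℓ b`, so the pairing `{a⁻¹, 1}, {u, b * u}` does not exceed the other two.
  have hupper := hℓ u a⁻¹ (b * u) 1
  have hlower := hℓ (b * u) a⁻¹ u 1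
  rw [apply_inv_mul_comm ℓ u] at hlower
  simp only [inv_inv, inv_one, one_mul, mul_one, map_inv_eq_map, ← mul_assoc a,
    apply_mul_inv_mul_of_commute ℓ hbu] at hupper hlower
  have ha := apply_le_apply_add_apply_mul ℓ a u
  have hb := apply_le_apply_add_apply_mul ℓ b u
  have hab := apply_le_apply_add_apply_mul ℓ (a * b) u
  have hmul := map_mul_le_add ℓ a b
  rw [max_eq_right (by linarith)] at hupper hlower
  rw [abs_le]
  unfold lengthGrowth
  constructor <;> linarith

theorem abs_lengthGrowth_commutatorElement_le (hℓ : FourPointCondition ℓ δ)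
    (hau : Commute a u) (hbu : Commute b u) (hu : 3 * (ℓ a + ℓ b) ≤ ℓ u) :
    |lengthGrowth ℓ u ⁅a, b⁆| ≤ 6 * δ := by
  have ha := apply_nonneg ℓ a
  have hb := apply_nonneg ℓ b
  have hab := hℓ.abs_lengthGrowth_mul_sub_le (a := a) hbu (by linarith)
  have hba := hℓ.abs_lengthGrowth_mul_sub_le (a := b) hau (by linarith)
  have hcomm := hℓ.abs_lengthGrowth_mul_sub_le (a := ⁅a, b⁆) (hbu.mul_left hau)
    (by linarith [apply_commutatorElement_le ℓ a b, map_mul_le_add ℓ b a])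
  have hswap : ⁅a, b⁆ * (b * a) = a * b := by
    rw [commutatorElement_def]
    group
  rw [hswap] at hcomm
  rw [abs_le] at *
  constructor <;> linarith

end FourPointCondition

namespace IsApproxMidpoint

theorem reverse (hp : IsApproxMidpoint ℓ ε u p) : IsApproxMidpoint ℓ ε u⁻¹ (u⁻¹ * p) where
  left := by
    rw [apply_inv_mul_comm, map_inv_eq_map]
    exact hp.right
  right := by
    rw [mul_inv_rev, inv_inv, mul_inv_cancel_right, map_inv_eq_map, map_inv_eq_map]
    exact hp.left

theorem apply_mul_le (hp : IsApproxMidpoint ℓ ε u p) (hℓ : FourPointCondition ℓ δ)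
    (hgrowth : lengthGrowth ℓ u h ≤ C) (hh : ℓ h + 2 * ε ≤ ℓ u + C) :
    ℓ (h * p) ≤ ℓ p + C + 2 * δ := by
  have hfour := hℓ u p h⁻¹ 1
  rw [apply_inv_mul_comm ℓ p] at hfour
  simp only [inv_inv, inv_one, one_mul, mul_one, map_inv_eq_map] at hfour
  have htri : ℓ u ≤ ℓ p + ℓ (p⁻¹ * u) := by
    simpa using map_mul_le_add ℓ p (p⁻¹ * u)
  have hright := hp.right
  unfold lengthGrowth at hgrowth
  have hmax : max (ℓ p + ℓ (h * u)) (ℓ (p⁻¹ * u) + ℓ h) ≤ ℓ p + ℓ u + C :=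
    max_le (by linarith) (by linarith)
  linarith

theorem apply_conj_le (hp : IsApproxMidpoint ℓ ε u p) (hℓ : FourPointCondition ℓ δ)
    (hhu : Commute h u) (hgrowth : lengthGrowth ℓ u h ≤ C) (hgrowth_inv : lengthGrowth ℓ u h⁻¹ ≤ C)
    (hh : ℓ h + 2 * ε ≤ ℓ u + C) :
    ℓ (p⁻¹ * h * p) ≤ C + 4 * δ + 2 * ε := by
  have hleft : ℓ (h * p) ≤ ℓ p + C + 2 * δ := hp.apply_mul_le hℓ hgrowth hh
  have hright : ℓ ((h * p)⁻¹ * u) ≤ ℓ (p⁻¹ * u) + C + 2 * δ := by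
    have hgrowth_rev : lengthGrowth ℓ u⁻¹ h ≤ C := by
      have hrev : ℓ (h * u⁻¹) = ℓ (h⁻¹ * u) := by
        rw [hhu.inv_right.eq, apply_inv_mul_comm]
      rwa [lengthGrowth, hrev, map_inv_eq_map]
    have hrev := hp.reverse.apply_mul_le hℓ hgrowth_rev (by rwa [map_inv_eq_map])
    rwa [← mul_assoc, hhu.inv_right.eq, mul_assoc, apply_inv_mul_comm ℓ u,
      apply_inv_mul_comm ℓ u] at hrev
  have hfour := hℓ u p (h * p) 1
  simp only [inv_one, one_mul, mul_one, map_inv_eq_map] at hfour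
  have hmax : max (ℓ p + ℓ ((h * p)⁻¹ * u)) (ℓ (p⁻¹ * u) + ℓ (h * p)) ≤
      ℓ u + 2 * ε + C + 2 * δ :=
    max_le (by linarith [hp.left, hp.right]) (by linarith [hp.left, hp.right])
  rw [mul_assoc]
  linarith

theorem apply_conj_commutatorElement_le (hp : IsApproxMidpoint ℓ ε u p)
    (hℓ : FourPointCondition ℓ δ) (hau : Commute a u) (hbu : Commute b u)
    (hu : 3 * (ℓ a + ℓ b) ≤ ℓ u) (hε : 2 * (ℓ a + ℓ b) + 2 * ε ≤ ℓ u) :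
    ℓ (p⁻¹ * ⁅a, b⁆ * p) ≤ 10 * δ + 2 * ε := by
  have hgrowth := hℓ.abs_lengthGrowth_commutatorElement_le hau hbu hu
  have hgrowth_inv := hℓ.abs_lengthGrowth_commutatorElement_le hbu hau (by rwa [add_comm (ℓ b)])
  rw [← commutatorElement_inv] at hgrowth_inv
  have hcomm : Commute ⁅a, b⁆ u :=
    ((hau.mul_left hbu).mul_left hau.inv_left).mul_left hbu.inv_left
  have hδ : 0 ≤ 6 * δ := (abs_nonneg _).trans hgrowth
  have hconj := hp.apply_conj_le hℓ hcomm (le_of_abs_le hgrowth) (le_of_abs_le hgrowth_inv)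
    (by linarith [apply_commutatorElement_le ℓ a b])
  linarith

end IsApproxMidpoint

theorem tendsto_apply_pow_atTop (hproper : Tendsto ℓ cofinite atTop) (hg : ¬IsOfFinOrder g) :
    Tendsto (fun n : ℕ ↦ ℓ (g ^ n)) atTop atTop := by
  rw [← Nat.cofinite_eq_atTop]
  exact hproper.comp (injective_pow_iff_not_isOfFinOrder.2 hg).tendsto_cofinite

theorem FourPointCondition.finite_commutatorSet_centralizer (hℓ : FourPointCondition ℓ δ)
    (hproper : Tendsto ℓ cofinite atTop) (hmid : ∀ u, ∃ p, IsApproxMidpoint ℓ ε u p)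
    (hg : ¬IsOfFinOrder g) : (commutatorSet (Subgroup.centralizer {g})).Finite := by
  choose mid hmid using hmid
  have hball : {a | ℓ a ≤ 10 * δ + 2 * ε}.Finite := by
    simpa only [eventually_cofinite, not_lt] using
      hproper.eventually_gt_atTop (10 * δ + 2 * ε)
  have hlong := tendsto_apply_pow_atTop hproper hg
  refine finite_of_forall_eventually_mem_finite (l := atTop)
    (f := fun (n : ℕ) (c : Subgroup.centralizer {g}) ↦ (mid (g ^ n))⁻¹ * (c : G) * mid (g ^ n))
    (fun n c d hcd ↦ by simpa using hcd) hball ?_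
  rintro _ ⟨a, b, rfl⟩
  have ha : Commute (a : G) g := Subgroup.mem_centralizer_singleton_iff.1 a.2
  have hb : Commute (b : G) g := Subgroup.mem_centralizer_singleton_iff.1 b.2
  filter_upwards [hlong.eventually_ge_atTop (3 * (ℓ a + ℓ b)),
    hlong.eventually_ge_atTop (2 * (ℓ a + ℓ b) + 2 * ε)] with n hn hnε
  exact (hmid (g ^ n)).apply_conj_commutatorElement_le hℓ (ha.pow_right n) (hb.pow_right n) hn hnε

end GroupSeminorm

section WordLength

variable {G : Type*} [Group G] {S : Set G} {δ : ℝ}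

theorem wordDist_eq_wordDist_one (S : Set G) (g h : G) :
    wordDist S g h = wordDist S 1 (g⁻¹ * h) := by
  simp only [wordDist, inv_one, one_mul]

theorem wordDist_one_prod_le {l : List G} (hl : ∀ x ∈ l, x ∈ S ∨ x⁻¹ ∈ S) :
    wordDist S 1 l.prod ≤ l.length := by
  refine csInf_le ⟨0, ?_⟩ ⟨l, hl, by simp, rfl⟩
  rintro _ ⟨l', -, -, rfl⟩
  exact Nat.cast_nonneg _

theorem exists_list_prod_eq_length_eq_wordDist (hS : Subgroup.closure S = ⊤) (g : G) :
    ∃ l : List G, (∀ x ∈ l, x ∈ S ∨ x⁻¹ ∈ S) ∧ l.prod = g ∧ l.length = wordDist S 1 g := by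
  classical
  have hword : ∃ k : ℕ, ∃ l : List G, (∀ x ∈ l, x ∈ S ∨ x⁻¹ ∈ S) ∧ l.prod = g ∧ l.length = k := by
    have hg : g ∈ Submonoid.closure (S ∪ S⁻¹) := by
      rw [← Subgroup.closure_toSubmonoid, hS]
      exact Subgroup.mem_top g
    obtain ⟨l, hl, hprod⟩ := Submonoid.exists_list_of_mem_closure hg
    exact ⟨l.length, l, hl, hprod, rfl⟩
  obtain ⟨l, hl, hprod, hlen⟩ := Nat.find_spec hword
  refine ⟨l, hl, hprod, le_antisymm ?_ (hprod ▸ wordDist_one_prod_le hl)⟩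
  refine le_csInf ⟨_, l, hl, by simpa using hprod, rfl⟩ ?_
  rintro _ ⟨l', hl', hprod', rfl⟩
  rw [hlen]
  exact_mod_cast Nat.find_min' hword ⟨l', hl', by simpa using hprod', rfl⟩

theorem wordDist_one_mul_le (hS : Subgroup.closure S = ⊤) (a b : G) :
    wordDist S 1 (a * b) ≤ wordDist S 1 a + wordDist S 1 b := by
  obtain ⟨l, hl, rfl, hlen⟩ := exists_list_prod_eq_length_eq_wordDist hS a
  obtain ⟨l', hl', rfl, hlen'⟩ := exists_list_prod_eq_length_eq_wordDist hS b
  have happend := wordDist_one_prod_le (List.forall_mem_append.2 ⟨hl, hl'⟩)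
  rwa [List.prod_append, List.length_append, Nat.cast_add, hlen, hlen'] at happend

theorem wordDist_one_inv_le (hS : Subgroup.closure S = ⊤) (a : G) :
    wordDist S 1 a⁻¹ ≤ wordDist S 1 a := by
  obtain ⟨l, hl, rfl, hlen⟩ := exists_list_prod_eq_length_eq_wordDist hS a
  have hinv : ∀ x ∈ (l.map (·⁻¹)).reverse, x ∈ S ∨ x⁻¹ ∈ S := by
    simpa only [List.mem_reverse, List.forall_mem_map, inv_inv, or_comm] using hl
  rw [← hlen, List.prod_inv_reverse]
  simpa only [List.length_reverse, List.length_map] using wordDist_one_prod_le hinv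

/-- The word length `d_S(1, g)` with respect to a generating set `S`, bundled as a group seminorm.
(For a set that does not generate, `wordDist` has the junk value `0` at elements represented by no
word, and subadditivity can fail.) -/
noncomputable def wordLength (S : Set G) (hS : Subgroup.closure S = ⊤) : GroupSeminorm G where
  toFun g := wordDist S 1 g
  map_one' := le_antisymm (by simpa using wordDist_one_prod_le (S := S) (l := []) (by simp))
    (Real.sInf_nonneg (by rintro _ ⟨l, -, -, rfl⟩; exact Nat.cast_nonneg _))
  mul_le' := wordDist_one_mul_le hS
  inv' a := le_antisymm (wordDist_one_inv_le hS a) (by simpa using wordDist_one_inv_le hS a⁻¹)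

theorem wordDist_eq_wordLength (hS : Subgroup.closure S = ⊤) (g h : G) :
    wordDist S g h = wordLength S hS (g⁻¹ * h) :=
  wordDist_eq_wordDist_one S g h

theorem finite_setOf_wordLength_le (hfin : S.Finite) (hS : Subgroup.closure S = ⊤) (R : ℝ) :
    {g | wordLength S hS g ≤ R}.Finite := by
  have : Finite (S ∪ S⁻¹ : Set G) := hfin.union hfin.inv
  refine ((List.finite_length_le (S ∪ S⁻¹ : Set G) ⌊R⌋₊).image
    fun l ↦ (l.map Subtype.val).prod).subset ?_
  intro g hg
  obtain ⟨l, hl, hprod, hlen⟩ := exists_list_prod_eq_length_eq_wordDist hS g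
  lift l to List (S ∪ S⁻¹ : Set G) using hl
  rw [List.length_map] at hlen
  exact ⟨l, Nat.le_floor (hlen.trans_le hg), hprod⟩

theorem tendsto_wordLength_cofinite_atTop (hfin : S.Finite) (hS : Subgroup.closure S = ⊤) :
    Tendsto (wordLength S hS) cofinite atTop := by
  refine tendsto_atTop.2 fun R ↦ ?_
  filter_upwards [(finite_setOf_wordLength_le hfin hS R).eventually_cofinite_notMem] with g hg
  exact (not_le.1 hg).le

theorem exists_isApproxMidpoint_wordLength (hS : Subgroup.closure S = ⊤) (u : G) :
    ∃ p, IsApproxMidpoint (wordLength S hS) (1 / 2) u p := by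
  obtain ⟨l, hl, rfl, hlen⟩ := exists_list_prod_eq_length_eq_wordDist hS u
  change (l.length : ℝ) = wordLength S hS l.prod at hlen
  set k := l.length / 2
  refine ⟨(l.take k).prod, ?_, ?_⟩
  · calc wordLength S hS (l.take k).prod ≤ (l.take k).length :=
          wordDist_one_prod_le fun x hx ↦ hl x (List.mem_of_mem_take hx)
      _ ≤ wordLength S hS l.prod / 2 + 1 / 2 := by
          have hcast : 2 * (l.take k).length ≤ l.length + 1 := by
            rw [List.length_take]
            omega
          rify at hcast
          linarith
  · have hdrop : (l.take k).prod⁻¹ * l.prod = (l.drop k).prod := by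
      rw [inv_mul_eq_iff_eq_mul, List.prod_take_mul_prod_drop]
    rw [hdrop]
    calc wordLength S hS (l.drop k).prod ≤ (l.drop k).length :=
          wordDist_one_prod_le fun x hx ↦ hl x (List.mem_of_mem_drop hx)
      _ ≤ wordLength S hS l.prod / 2 + 1 / 2 := by
          have hcast : 2 * (l.drop k).length ≤ l.length + 1 := by
            rw [List.length_drop]
            omega
          rify at hcast
          linarith

theorem fourPointCondition_wordLength (hS : Subgroup.closure S = ⊤)
    (hyp : ∀ w x y z : G,
      gromovProd S w x y ≥ min (gromovProd S w x z) (gromovProd S w y z) - δ) :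
    FourPointCondition (wordLength S hS) δ := by
  intro w x y z
  have hprod := hyp w x y z
  simp only [gromovProd, wordDist_eq_wordLength hS, ge_iff_le, sub_le_iff_le_add, min_le_iff]
    at hprod
  rw [← sub_le_iff_le_add, le_max_iff]
  exact hprod.imp (fun h ↦ by linarith) (fun h ↦ by linarith)

end WordLength

namespace IsHyperbolicGroup

variable {G : Type*} [Group G] {g a b : G}

theorem finite_commutatorSet_centralizer (hG : IsHyperbolicGroup G) (hg : ¬IsOfFinOrder g) :
    (commutatorSet (Subgroup.centralizer {g})).Finite := by
  obtain ⟨S, hfin, hS, δ, -, hyp⟩ := hG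
  exact (fourPointCondition_wordLength hS hyp).finite_commutatorSet_centralizer
    (tendsto_wordLength_cofinite_atTop hfin hS) (exists_isApproxMidpoint_wordLength hS) hg

theorem isOfFinOrder_commutatorElement (hG : IsHyperbolicGroup G) (hg : ¬IsOfFinOrder g)
    (ha : Commute a g) (hb : Commute b g) : IsOfFinOrder ⁅a, b⁆ := by
  have : Finite (commutatorSet (Subgroup.centralizer {g})) := hG.finite_commutatorSet_centralizer hg
  exact Submonoid.isOfFinOrder_coe.2 (isOfFinOrder_commutatorElement_of_finite_commutatorSet
    (⟨a, Subgroup.mem_centralizer_singleton_iff.2 ha⟩ : Subgroup.centralizer {g})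
    ⟨b, Subgroup.mem_centralizer_singleton_iff.2 hb⟩)

end IsHyperbolicGroup

/-- A torsion-free hyperbolic group has trivial root structure: `x^n = y^n` for some
nonzero integer `n` implies `x = y`. -/
theorem stmt_14 {G : Type*} [Group G] (hG : IsHyperbolicGroup G)
    (htf : ∀ g : G, g ≠ 1 → ∀ n : ℤ, n ≠ 0 → g ^ n ≠ 1)
    (x y : G) (n : ℤ) (hn : n ≠ 0) (hxy : x ^ n = y ^ n) :
    x = y := by
  have eq_one : ∀ g : G, IsOfFinOrder g → g = 1 := fun g hg ↦ by
    obtain ⟨m, hm, hgm⟩ := isOfFinOrder_iff_zpow_eq_one.1 hg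
    by_contra hne
    exact htf g hne m hm hgm
  have hcomm : Commute x y := by
    by_cases hx : x = 1
    · exact hx ▸ Commute.one_left y
    have hg : ¬IsOfFinOrder (x ^ n) := fun hfin ↦ htf x hx n hn (eq_one _ hfin)
    have hyg : Commute y (x ^ n) := hxy ▸ Commute.self_zpow y n
    exact commutatorElement_eq_one_iff_commute.1
      (eq_one _ (hG.isOfFinOrder_commutatorElement hg (Commute.self_zpow x n) hyg))
  exact mul_inv_eq_one.1 (eq_one _ (isOfFinOrder_mul_inv_of_zpow_eq hcomm hn hxy))
end
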